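/- Let M ≥ 1 and let B be a real M×M doubly stochastic matrix with spectral expansion λ(B) ≤ β, where β ∈ [0,1]. Then there exist real M×M matrices B₁ and B₂ with B = B₁B₂ such that: B₁ is symmetric positive semidefinite; B₁𝟙_M = 𝟙_M and B₂𝟙_M = 𝟙_M; 𝟙_Mᵀ B₁ = 𝟙_Mᵀ and 𝟙_Mᵀ B₂ = 𝟙_Mᵀ; and for every x ∈ ℝ^M orthogonal to 𝟙_M, ‖B₁x‖ ≤ √β·‖x‖ and ‖B₂x‖ ≤ √β·‖x‖. -/

import Mathlib

/-!
Put `S = B Bᵀ`, a positive semidefinite matrix fixing `𝟙`. The factors are `B₁ = S^{1/4}` and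
`B₂ = S^{-1/4} B`, where `S^{-1/4}` is the pseudo-inverse of `S^{1/4}` (in terms of the singular
value decomposition `B = PΣQᵀ` these are `P√ΣPᵀ` and `P√ΣQᵀ`). The lemma `exists_fourth_root`
extracts from the spectral theorem the few identities about `A = S^{1/4}` and `C = S^{-1/4}` that
are needed; in particular both fix `𝟙`, because `S` does. Since `AC` is the projection onto the
range of `S`, which is the range of `B`, it follows that `A(CB) = B`.

The norm bounds follow from Cauchy–Schwarz. For `v ⊥ 𝟙`,
`‖Av‖² = ⟨v, A²v⟩ ≤ ‖v‖ ‖A²v‖ = ‖v‖ ‖Bᵀv‖ ≤ β ‖v‖²`, and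
`‖CBv‖² = ⟨Bv, C²Bv⟩ ≤ ‖Bv‖ ‖C²Bv‖ ≤ β ‖v‖²`, as `C²B` is a partial isometry.
-/

open Matrix Kronecker

/-- Euclidean norm of a real vector. -/
noncomputable def euclNorm {n : Type*} [Fintype n] (x : n → ℝ) : ℝ :=
  Real.sqrt (∑ i, x i ^ 2)

/-- A real square matrix is doubly stochastic if its entries are nonnegative and
each row sum and each column sum equals 1. -/
def IsDoublyStochastic {n : Type*} [Fintype n] (A : Matrix n n ℝ) : Prop :=
  (∀ i j, 0 ≤ A i j) ∧ (∀ i, ∑ j, A i j = 1) ∧ (∀ j, ∑ i, A i j = 1)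

/-- A permutation matrix. -/
def IsPermMatrix {n : Type*} [DecidableEq n] (A : Matrix n n ℝ) : Prop :=
  ∃ σ : Equiv.Perm n, ∀ p q, A p q = if p = σ q then 1 else 0

/-- The function f(α,β₁,β₂) bounding the spectral expansion of the generalized
zig-zag product. -/
noncomputable def fZZ (α β₁ β₂ : ℝ) : ℝ :=
  (1 / 2) * (Real.sqrt (α ^ 2 * (1 - β₁ ^ 2) * (1 - β₂ ^ 2) + (β₁ + β₂) ^ 2)
           + Real.sqrt (α ^ 2 * (1 - β₁ ^ 2) * (1 - β₂ ^ 2) + (β₁ - β₂) ^ 2))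

/-- The M×M all-ones matrix J_M. -/
def onesMat (M : ℕ) : Matrix (Fin M) (Fin M) ℝ := Matrix.of fun _ _ => 1

/-- P = I_N ⊗ (1/M)·J_M, the orthogonal projection onto blockwise-constant vectors. -/
noncomputable def projP (N M : ℕ) : Matrix (Fin N × Fin M) (Fin N × Fin M) ℝ :=
  (1 : Matrix (Fin N) (Fin N) ℝ) ⊗ₖ ((M : ℝ)⁻¹ • onesMat M)

/-- The blockwise-constant part x^∥ of a vector indexed by [N]×[M]. -/
noncomputable def blockPar {N M : ℕ} (x : Fin N × Fin M → ℝ) : Fin N × Fin M → ℝ :=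
  fun p => (∑ j, x (p.1, j)) / M

/-- The part x^⊥ = x − x^∥ of a vector indexed by [N]×[M]. -/
noncomputable def blockPerp {N M : ℕ} (x : Fin N × Fin M → ℝ) : Fin N × Fin M → ℝ :=
  x - blockPar x

lemma euclNorm_nonneg {n : Type*} [Fintype n] (x : n → ℝ) : 0 ≤ euclNorm x :=
  Real.sqrt_nonneg _

lemma euclNorm_sq {n : Type*} [Fintype n] (x : n → ℝ) : euclNorm x ^ 2 = x ⬝ᵥ x := by
  rw [euclNorm, Real.sq_sqrt (Finset.sum_nonneg fun i _ => sq_nonneg _)]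
  simp [dotProduct, sq]

lemma dotProduct_le_euclNorm_mul {n : Type*} [Fintype n] (x y : n → ℝ) :
    x ⬝ᵥ y ≤ euclNorm x * euclNorm y :=
  Real.sum_mul_le_sqrt_mul_sqrt _ _ _

lemma euclNorm_eq_of_dotProduct_eq {m n : Type*} [Fintype m] [Fintype n] {x : m → ℝ} {y : n → ℝ}
    (h : x ⬝ᵥ x = y ⬝ᵥ y) : euclNorm x = euclNorm y := by
  rw [← euclNorm_sq, ← euclNorm_sq] at h
  exact (pow_left_inj₀ (euclNorm_nonneg x) (euclNorm_nonneg y) two_ne_zero).1 h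

lemma mulVec_dotProduct_mulVec {n : Type*} [Fintype n] (X Y : Matrix n n ℝ) (u v : n → ℝ) :
    (X *ᵥ u) ⬝ᵥ (Y *ᵥ v) = u ⬝ᵥ ((Xᵀ * Y) *ᵥ v) := by
  rw [← mulVec_mulVec, dotProduct_mulVec u, vecMul_transpose]

lemma le_of_sq_le_mul_self {a b : ℝ} (ha : 0 ≤ a) (h : b ^ 2 ≤ a * b) : b ≤ a := by
  by_contra hlt
  nlinarith

/-- A positive semidefinite matrix `S` has a positive semidefinite fourth root `A`, and `A` has a
symmetric pseudo-inverse `C` commuting with it. Both are functions of `S` taking the value `1` at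
the eigenvalue `1`, so they fix every fixed vector of `S`. -/
lemma exists_fourth_root {n : Type*} [Fintype n] [DecidableEq n] {S : Matrix n n ℝ}
    (hS : S.PosSemidef) :
    ∃ A C : Matrix n n ℝ, A.PosSemidef ∧ Cᵀ = C ∧ A * A * (A * A) = S ∧ A * C = C * A ∧
      A * C * A = A ∧ C * A * C = C ∧
      ∀ x : n → ℝ, S *ᵥ x = x → A *ᵥ x = x ∧ C *ᵥ x = x := by
  obtain ⟨U, d, hd, hU, hU', hSU⟩ : ∃ (U : Matrix n n ℝ) (d : n → ℝ), (∀ i, 0 ≤ d i) ∧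
      Uᵀ * U = 1 ∧ U * Uᵀ = 1 ∧ S = U * diagonal d * Uᵀ := by
    refine ⟨hS.1.eigenvectorUnitary, hS.1.eigenvalues, hS.eigenvalues_nonneg, ?_, ?_, ?_⟩
    · exact Unitary.coe_star_mul_self hS.1.eigenvectorUnitary
    · exact Unitary.coe_mul_star_self hS.1.eigenvectorUnitary
    · exact hS.1.spectral_theorem
  -- `F f` is the functional calculus `f(S)`, indexed by the values of `f` on the eigenvalues.
  let F : (n → ℝ) → Matrix n n ℝ := fun f => U * diagonal f * Uᵀ
  have hF : ∀ f g, F f * F g = F (fun i => f i * g i) := by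
    intro f g
    calc F f * F g = U * diagonal f * (Uᵀ * U) * diagonal g * Uᵀ := by
          simp only [F, Matrix.mul_assoc]
      _ = _ := by
          rw [hU, Matrix.mul_one, Matrix.mul_assoc U, diagonal_mul_diagonal]
  have hfix : ∀ f : n → ℝ, (∀ i, d i = 1 → f i = 1) → ∀ x, S *ᵥ x = x → F f *ᵥ x = x := by
    intro f hf x hx
    have h1 : diagonal d *ᵥ (Uᵀ *ᵥ x) = Uᵀ *ᵥ x := by
      conv_rhs => rw [← hx, hSU]
      rw [mulVec_mulVec, mulVec_mulVec, ← Matrix.mul_assoc, ← Matrix.mul_assoc, hU,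
        Matrix.one_mul]
    have h2 : diagonal f *ᵥ (Uᵀ *ᵥ x) = Uᵀ *ᵥ x := by
      ext i
      have h3 := congrFun h1 i
      rw [mulVec_diagonal] at h3 ⊢
      by_cases h0 : (Uᵀ *ᵥ x) i = 0
      · simp [h0]
      · rw [hf i (mul_right_cancel₀ h0 (by rw [h3, one_mul])), one_mul]
    rw [← mulVec_mulVec, ← mulVec_mulVec, h2, mulVec_mulVec, hU', one_mulVec]
  refine ⟨F fun i => √√(d i), F fun i => (√√(d i))⁻¹, ?_, ?_, ?_, ?_, ?_, ?_, ?_⟩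
  · have := (PosSemidef.diagonal (n := n) (d := fun i => √√(d i))
      (fun i => Real.sqrt_nonneg _)).mul_mul_conjTranspose_same U
    simpa [F] using this
  · simp [F, Matrix.mul_assoc]
  · rw [hF, hF, hSU]
    simp only [F]
    congr 3
    ext i
    rw [Real.mul_self_sqrt (Real.sqrt_nonneg _), Real.mul_self_sqrt (hd i)]
  · rw [hF, hF]
    simp only [mul_comm]
  · rw [hF, hF]
    simp only [mul_inv_mul_cancel]
  · rw [hF, hF]
    congr 1
    ext i
    simpa using mul_inv_mul_cancel (√√(d i))⁻¹
  · intro x hx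
    exact ⟨hfix _ (fun i hi => by simp [hi]) x hx, hfix _ (fun i hi => by simp [hi]) x hx⟩

theorem doubly_stochastic_sqrt_factorization
    (M : ℕ) (hM : 1 ≤ M) (β : ℝ)
    (B : Matrix (Fin M) (Fin M) ℝ) (hB : IsDoublyStochastic B)
    (hBβ : ∀ v : Fin M → ℝ, ∑ k, v k = 0 → euclNorm (B.mulVec v) ≤ β * euclNorm v) :
    ∃ B₁ B₂ : Matrix (Fin M) (Fin M) ℝ,
      B = B₁ * B₂ ∧ B₁.PosSemidef ∧
      B₁.mulVec (fun _ => 1) = (fun _ => 1) ∧ B₂.mulVec (fun _ => 1) = (fun _ => 1) ∧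
      Matrix.vecMul (fun _ => 1) B₁ = (fun _ => 1) ∧
      Matrix.vecMul (fun _ => 1) B₂ = (fun _ => 1) ∧
      (∀ v : Fin M → ℝ, ∑ k, v k = 0 →
        euclNorm (B₁.mulVec v) ≤ Real.sqrt β * euclNorm v) ∧
      (∀ v : Fin M → ℝ, ∑ k, v k = 0 →
        euclNorm (B₂.mulVec v) ≤ Real.sqrt β * euclNorm v) := by
  obtain ⟨-, hrow, hcol⟩ := hB
  have hB1 : B *ᵥ (fun _ => 1) = fun _ => 1 := by
    ext i; simpa [mulVec, dotProduct] using hrow i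
  have h1B : (fun _ => 1) ᵥ* B = fun _ => 1 := by
    ext i; simpa [vecMul, dotProduct] using hcol i
  have hBt1 : Bᵀ *ᵥ (fun _ => 1) = fun _ => 1 := by rw [mulVec_transpose, h1B]
  have hS : (B * Bᵀ).PosSemidef := by simpa using posSemidef_self_mul_conjTranspose B
  obtain ⟨A, C, hA, hC, hAS, hcomm, hACA, hCAC, hfix⟩ := exists_fourth_root hS
  have hAt : Aᵀ = A := by simpa using hA.1.eq
  obtain ⟨hA1, hC1⟩ := hfix (fun _ => 1) (by rw [← mulVec_mulVec, hBt1, hB1])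
  -- `1 - A * C` annihilates `B * Bᵀ`, hence also `B`.
  have hQB : A * C * B = B := by
    have h0 : (1 - A * C) * (B * Bᵀ) = 0 := by
      rw [← hAS, Matrix.sub_mul, Matrix.one_mul, Matrix.mul_assoc A A, ← Matrix.mul_assoc (A * C),
        hACA, sub_self]
    have h1 : (1 - A * C) * B = 0 := by
      have := (mul_self_mul_conjTranspose_eq_zero B (1 - A * C)).1
      simp only [conjTranspose_eq_transpose_of_trivial] at this
      exact this h0
    rw [Matrix.sub_mul, Matrix.one_mul, sub_eq_zero] at h1
    exact h1.symm
  -- The partial isometry `C * C * B` from the polar decomposition of `B` has norm at most `1`.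
  have hW : ∀ v, euclNorm ((C * C * B) *ᵥ v) ≤ euclNorm v := by
    intro v
    set W := C * C * B with hWdef
    have hWWW : W * Wᵀ * W = W := by
      have e : W * Wᵀ = C * C * (A * A * (A * A)) * (C * C) := by
        rw [hAS]; simp [hWdef, hC, Matrix.mul_assoc]
      have e2 : C * C * (A * A * (A * A)) * (C * C) * (C * C) = C * C := by
        have k1 : C * (A * C) = C := by rw [← Matrix.mul_assoc, hCAC]
        have k2 : ∀ X, C * (A * (C * X)) = C * X := fun X => by
          rw [← Matrix.mul_assoc A, ← Matrix.mul_assoc C, k1]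
        have k3 : ∀ X, A * (C * X) = C * (A * X) := fun X => by
          rw [← Matrix.mul_assoc, hcomm, Matrix.mul_assoc]
        have k4 : ∀ X, C * (C * (A * X)) = C * X := fun X => by rw [← k3, k2]
        have k5 : C * (C * A) = C := by rw [← hcomm, k1]
        simp only [Matrix.mul_assoc, k3, k4, hcomm, k5]
      calc W * Wᵀ * W = C * C * (A * A * (A * A)) * (C * C) * (C * C) * B := by
            rw [e, hWdef]; simp only [Matrix.mul_assoc]
        _ = W := by rw [e2]
    have h1 : euclNorm ((Wᵀ * W) *ᵥ v) = euclNorm (W *ᵥ v) := by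
      apply euclNorm_eq_of_dotProduct_eq
      rw [mulVec_dotProduct_mulVec, mulVec_dotProduct_mulVec]
      congr 2
      rw [transpose_mul, transpose_transpose, Matrix.mul_assoc, ← Matrix.mul_assoc W, hWWW]
    apply le_of_sq_le_mul_self (euclNorm_nonneg _)
    rw [euclNorm_sq, mulVec_dotProduct_mulVec, ← h1]
    exact dotProduct_le_euclNorm_mul _ _
  have hβ : ∀ v : Fin M → ℝ, ∑ k, v k = 0 → 0 ≤ β * euclNorm v := fun v hv =>
    (euclNorm_nonneg _).trans (hBβ v hv)
  -- A bound on the square is enough. If `β < 0` then `v = 0`, and the bound forces `x = 0`.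
  have hfinish : ∀ v x : Fin M → ℝ, ∑ k, v k = 0 →
      euclNorm x ^ 2 ≤ euclNorm v * (β * euclNorm v) → euclNorm x ≤ √β * euclNorm v := by
    intro v x hv h
    have hv0 := euclNorm_nonneg v
    rcases hv0.eq_or_lt with h0 | h0
    · rw [← h0] at h ⊢
      nlinarith [euclNorm_nonneg x]
    · have hb : 0 ≤ β := nonneg_of_mul_nonneg_left (hβ v hv) h0
      apply le_of_sq_le_sq _ (by positivity)
      rw [mul_pow, Real.sq_sqrt hb]
      linarith
  have hBt : ∀ v : Fin M → ℝ, ∑ k, v k = 0 → euclNorm (Bᵀ *ᵥ v) ≤ β * euclNorm v := by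
    intro v hv
    have hsum : ∑ k, (Bᵀ *ᵥ v) k = 0 := by
      have : (fun _ => (1 : ℝ)) ⬝ᵥ (Bᵀ *ᵥ v) = 0 := by
        rw [dotProduct_mulVec, vecMul_transpose, hB1]
        simpa [dotProduct] using hv
      simpa [dotProduct] using this
    apply le_of_sq_le_mul_self (hβ v hv)
    rw [euclNorm_sq, mulVec_dotProduct_mulVec, transpose_transpose, ← mulVec_mulVec]
    refine (dotProduct_le_euclNorm_mul _ _).trans ?_
    calc euclNorm v * euclNorm (B *ᵥ (Bᵀ *ᵥ v))
        ≤ euclNorm v * (β * euclNorm (Bᵀ *ᵥ v)) :=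
          mul_le_mul_of_nonneg_left (hBβ _ hsum) (euclNorm_nonneg _)
      _ = _ := by ring
  have h1A : (fun _ => 1) ᵥ* A = fun _ => 1 := by rw [← mulVec_transpose, hAt, hA1]
  have h1C : (fun _ => 1) ᵥ* C = fun _ => 1 := by rw [← mulVec_transpose, hC, hC1]
  refine ⟨A, C * B, by rw [← Matrix.mul_assoc, hQB], hA, hA1, by rw [← mulVec_mulVec, hB1, hC1],
    h1A, by rw [← vecMul_vecMul, h1C, h1B], ?_, ?_⟩
  · intro v hv
    apply hfinish v _ hv
    have h1 : euclNorm ((A * A) *ᵥ v) = euclNorm (Bᵀ *ᵥ v) := by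
      apply euclNorm_eq_of_dotProduct_eq
      rw [mulVec_dotProduct_mulVec, mulVec_dotProduct_mulVec, transpose_mul, hAt, hAS,
        transpose_transpose]
    rw [euclNorm_sq, mulVec_dotProduct_mulVec, hAt]
    refine (dotProduct_le_euclNorm_mul _ _).trans ?_
    rw [h1]
    exact mul_le_mul_of_nonneg_left (hBt v hv) (euclNorm_nonneg _)
  · intro v hv
    apply hfinish v _ hv
    have h1 : ((C * B) *ᵥ v) ⬝ᵥ ((C * B) *ᵥ v) = ((C * C * B) *ᵥ v) ⬝ᵥ (B *ᵥ v) := by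
      rw [mulVec_dotProduct_mulVec, mulVec_dotProduct_mulVec]
      simp only [transpose_mul, hC, Matrix.mul_assoc]
    rw [euclNorm_sq, h1]
    exact (dotProduct_le_euclNorm_mul _ _).trans
      (mul_le_mul (hW v) (hBβ v hv) (euclNorm_nonneg _) (euclNorm_nonneg _))
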